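/- arXiv:2004.13231 — 2 statements merged into one kernel-verified Lean document; each statement's English description precedes it below -/
import Mathlib

section
/- Let f : {0,1}^n → {0,1} be a nonconstant total Boolean function. Then the spectral adversary bound is at least the spectral sensitivity: SA(f) ≥ λ(f). In particular, the matrix Γ = A_f satisfies ‖Γ∘D_i‖ ≤ 1 for every i ∈ [n], so ‖Γ‖ / max_{i∈[n]} ‖Γ∘D_i‖ ≥ λ(f). -/
/-!
For `x ≠ y` some coordinate `i` separates `x` and `y`, so every entry of a matrix `Γ` with zero
diagonal is an entry of some `Γ ∘ D_i`. Since the spectral norm dominates each entry and is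
dominated by the sum of all absolute values of entries, `‖Γ‖ ≤ 4 ^ n * max_i ‖Γ ∘ D_i‖`
(`specNorm_le_of_diag_zero`). This crude inequality shows both that the set of ratios defining
`SA f` is bounded above, so that its real-valued supremum is the genuine one, and that
`max_i ‖Γ ∘ D_i‖ = 0` forces `‖Γ‖ = 0`, so that division by zero is harmless.

For `Γ = A_f`, the matrix `A_f ∘ D_i` only retains edges in direction `i`: it sends `v` to
`x ↦ c x * v (flipBit x i)` with `c x ∈ {0, 1}`. As flipping bit `i` permutes the cube, this
map is a contraction. Hence `max_i ‖A_f ∘ D_i‖ ≤ 1` and the ratio for `A_f` is at least `‖A_f‖`.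
-/

/-- Flip bit `i` of the Boolean string `x`. -/
def flipBit {n : ℕ} (x : Fin n → Bool) (i : Fin n) : Fin n → Bool :=
  Function.update x i (!x i)

/-- Sensitivity of `f` at input `x`. -/
def sensAt {n : ℕ} (f : (Fin n → Bool) → Bool) (x : Fin n → Bool) : ℕ :=
  (Finset.univ.filter fun i : Fin n => f (flipBit x i) ≠ f x).card

/-- (Maximum) sensitivity of `f`. -/
def sens {n : ℕ} (f : (Fin n → Bool) → Bool) : ℕ :=
  Finset.univ.sup (sensAt f)

/-- `b`-sensitivity of `f`: max sensitivity over inputs with value `b` (0 if none). -/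
def sensB {n : ℕ} (f : (Fin n → Bool) → Bool) (b : Bool) : ℕ :=
  (Finset.univ.filter fun x => f x = b).sup (sensAt f)

/-- Adjacency matrix of the sensitivity graph of `f`. -/
def adjMat {n : ℕ} (f : (Fin n → Bool) → Bool) :
    Matrix (Fin n → Bool) (Fin n → Bool) ℝ :=
  fun x y => if (∃ i, y = flipBit x i) ∧ f x ≠ f y then 1 else 0

/-- Spectral norm (ℓ₂ operator norm) of a real matrix. -/
noncomputable def specNorm {m k : Type*} [Fintype m] [Fintype k] [DecidableEq k]
    (M : Matrix m k ℝ) : ℝ :=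
  ‖LinearMap.toContinuousLinearMap (Matrix.toEuclideanLin M)‖

/-- Spectral sensitivity of `f`. -/
noncomputable def specSens {n : ℕ} (f : (Fin n → Bool) → Bool) : ℝ :=
  specNorm (adjMat f)

/-- Degree of `f`: minimal total degree of a real polynomial representing `f` on `{0,1}^n`. -/
noncomputable def bdeg {n : ℕ} (f : (Fin n → Bool) → Bool) : ℕ :=
  sInf {d | ∃ p : MvPolynomial (Fin n) ℝ, p.totalDegree = d ∧
    ∀ x : Fin n → Bool,
      MvPolynomial.eval (fun i => if x i then (1 : ℝ) else 0) p
        = if f x then 1 else 0}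

/-- The matrix `D_i`, with `D_i[x,y] = 1` iff `x` and `y` differ in bit `i`. -/
def Dmat {n : ℕ} (i : Fin n) : Matrix (Fin n → Bool) (Fin n → Bool) ℝ :=
  fun x y => if x i ≠ y i then 1 else 0

/-- The spectral adversary bound of `f`. -/
noncomputable def SA {n : ℕ} (f : (Fin n → Bool) → Bool) : ℝ :=
  sSup {r | ∃ Γ : Matrix (Fin n → Bool) (Fin n → Bool) ℝ,
    Γ.IsSymm ∧ (∀ x y, 0 ≤ Γ x y) ∧ Γ ≠ 0 ∧
    (∀ x y, f x = f y → Γ x y = 0) ∧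
    r = specNorm Γ / ⨆ i : Fin n, specNorm (Matrix.hadamard Γ (Dmat i))}

lemma flipBit_flipBit {n : ℕ} (x : Fin n → Bool) (i : Fin n) :
    flipBit (flipBit x i) i = x := by
  simp [flipBit]

lemma specNorm_nonneg {m k : Type*} [Fintype m] [Fintype k] [DecidableEq k]
    (M : Matrix m k ℝ) : 0 ≤ specNorm M := norm_nonneg _

lemma abs_entry_le_specNorm {m k : Type*} [Fintype m] [Fintype k] [DecidableEq k]
    (M : Matrix m k ℝ) (x : m) (y : k) : |M x y| ≤ specNorm M := by
  have h1 := (LinearMap.toContinuousLinearMap (Matrix.toEuclideanLin M)).le_opNorm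
    (EuclideanSpace.single y (1 : ℝ))
  have h2 := PiLp.norm_apply_le (Matrix.toEuclideanLin M (EuclideanSpace.single y (1 : ℝ))) x
  have h3 : (Matrix.toEuclideanLin M (EuclideanSpace.single y (1 : ℝ))) x = M x y := by
    simp [Matrix.toLpLin_apply]
  rw [h3, Real.norm_eq_abs] at h2
  refine h2.trans ?_
  simpa [specNorm] using h1

lemma specNorm_le_sum_abs {m k : Type*} [Fintype m] [Fintype k] [DecidableEq k]
    (M : Matrix m k ℝ) : specNorm M ≤ ∑ x, ∑ y, |M x y| := by
  refine ContinuousLinearMap.opNorm_le_bound _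
    (Finset.sum_nonneg fun x _ => Finset.sum_nonneg fun y _ => abs_nonneg _) fun v => ?_
  -- the Euclidean norm is at most the sum of the absolute values of the coordinates
  have hl1 : ∀ w : EuclideanSpace ℝ m, ‖w‖ ≤ ∑ x, |w x| := fun w => by
    rw [EuclideanSpace.norm_eq]
    refine Real.sqrt_le_iff.2 ⟨Finset.sum_nonneg fun x _ => abs_nonneg _, ?_⟩
    simp only [Real.norm_eq_abs]
    exact Finset.sum_sq_le_sq_sum_of_nonneg fun x _ => abs_nonneg _
  refine (hl1 _).trans ?_
  rw [Finset.sum_mul]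
  refine Finset.sum_le_sum fun x _ => ?_
  have hx : (LinearMap.toContinuousLinearMap (Matrix.toEuclideanLin M) v) x
      = ∑ y, M x y * v y := by
    simp [Matrix.toLpLin_apply, Matrix.mulVec, dotProduct]
  rw [hx, Finset.sum_mul]
  refine (Finset.abs_sum_le_sum_abs _ _).trans (Finset.sum_le_sum fun y _ => ?_)
  rw [abs_mul]
  exact mul_le_mul_of_nonneg_left (PiLp.norm_apply_le v y) (abs_nonneg _)

/-- The factor `4 ^ n` counts the entries of `M`; for `n = 0` the supremum is over the empty type,
hence `0`, and so is `M`. -/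
lemma specNorm_le_of_diag_zero {n : ℕ} (M : Matrix (Fin n → Bool) (Fin n → Bool) ℝ)
    (hM : ∀ x, M x x = 0) :
    specNorm M ≤ 4 ^ n * ⨆ i : Fin n, specNorm (Matrix.hadamard M (Dmat i)) := by
  have hS : 0 ≤ ⨆ i : Fin n, specNorm (Matrix.hadamard M (Dmat i)) :=
    Real.iSup_nonneg fun i => specNorm_nonneg _
  have hentry : ∀ x y, |M x y| ≤ ⨆ i : Fin n, specNorm (Matrix.hadamard M (Dmat i)) := by
    intro x y
    by_cases hxy : x = y
    · subst hxy
      simpa [hM x] using hS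
    · obtain ⟨i, hi⟩ := Function.ne_iff.1 hxy
      have h := abs_entry_le_specNorm (Matrix.hadamard M (Dmat i)) x y
      have he : Matrix.hadamard M (Dmat i) x y = M x y := by
        simp [Matrix.hadamard_apply, Dmat, hi]
      rw [he] at h
      exact h.trans (le_ciSup
        (f := fun i : Fin n => specNorm (Matrix.hadamard M (Dmat i)))
        (Set.finite_range _).bddAbove i)
  refine (specNorm_le_sum_abs M).trans ?_
  refine (Finset.sum_le_sum fun x _ => Finset.sum_le_sum fun y _ => hentry x y).trans (le_of_eq ?_)
  simp only [Finset.sum_const, Finset.card_univ, Fintype.card_fun, Fintype.card_bool,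
    Fintype.card_fin, nsmul_eq_mul, Nat.cast_pow, Nat.cast_ofNat]
  rw [← mul_assoc, ← mul_pow]
  norm_num

lemma adjMat_isSymm {n : ℕ} (f : (Fin n → Bool) → Bool) : (adjMat f).IsSymm := by
  refine Matrix.IsSymm.ext fun x y => ?_
  have h : ∀ x y : Fin n → Bool, (∃ i, y = flipBit x i) → ∃ i, x = flipBit y i := by
    rintro x y ⟨i, rfl⟩
    exact ⟨i, (flipBit_flipBit x i).symm⟩
  unfold adjMat
  exact if_congr (and_congr ⟨h y x, h x y⟩ ne_comm) rfl rfl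

lemma adjMat_eq_zero {n : ℕ} {f : (Fin n → Bool) → Bool} {x y : Fin n → Bool}
    (h : f x = f y) : adjMat f x y = 0 := by
  simp [adjMat, h]

/-- `A_f ∘ D_i` only contains edges in direction `i`. -/
lemma adjMat_hadamard_apply {n : ℕ} (f : (Fin n → Bool) → Bool) (i : Fin n)
    (x y : Fin n → Bool) :
    Matrix.hadamard (adjMat f) (Dmat i) x y
      = if y = flipBit x i then (if f x ≠ f (flipBit x i) then 1 else 0) else 0 := by
  rw [Matrix.hadamard_apply]
  by_cases hy : y = flipBit x i
  · subst hy
    have : x i ≠ flipBit x i i := by simp [flipBit]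
    have hex : ∃ j, flipBit x i = flipBit x j := ⟨i, rfl⟩
    simp [adjMat, Dmat, this, hex]
  · rw [if_neg hy]
    by_cases hj : ∃ j, y = flipBit x j
    · obtain ⟨j, rfl⟩ := hj
      have hij : i ≠ j := fun h => hy (by rw [h])
      simp [Dmat, flipBit, Function.update_of_ne hij]
    · simp [adjMat, hj]

lemma specNorm_adjMat_hadamard_le_one {n : ℕ} (f : (Fin n → Bool) → Bool) (i : Fin n) :
    specNorm (Matrix.hadamard (adjMat f) (Dmat i)) ≤ 1 := by
  refine ContinuousLinearMap.opNorm_le_bound _ zero_le_one fun v => ?_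
  have hx : ∀ x, (LinearMap.toContinuousLinearMap
      (Matrix.toEuclideanLin (Matrix.hadamard (adjMat f) (Dmat i))) v) x
      = (if f x ≠ f (flipBit x i) then 1 else 0) * v (flipBit x i) := by
    intro x
    have : (LinearMap.toContinuousLinearMap
      (Matrix.toEuclideanLin (Matrix.hadamard (adjMat f) (Dmat i))) v) x
      = ∑ y, Matrix.hadamard (adjMat f) (Dmat i) x y * v y := by
      simp [Matrix.toLpLin_apply, Matrix.mulVec, dotProduct]
    rw [this]
    simp only [adjMat_hadamard_apply, ite_mul _ _ _ (v _), zero_mul, Finset.sum_ite_eq',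
      Finset.mem_univ, if_true]
  rw [one_mul, EuclideanSpace.norm_eq, EuclideanSpace.norm_eq]
  refine Real.sqrt_le_sqrt ?_
  have hinv : Function.Involutive fun x : Fin n → Bool => flipBit x i :=
    fun x => flipBit_flipBit x i
  -- reindex the right-hand side along the permutation `x ↦ flipBit x i`
  rw [← Equiv.sum_comp hinv.toPerm fun x => ‖v x‖ ^ 2]
  refine Finset.sum_le_sum fun x _ => ?_
  rw [hx x]
  change _ ≤ ‖v (flipBit x i)‖ ^ 2
  split_ifs
  · rw [one_mul]
  · rw [zero_mul, norm_zero, zero_pow two_ne_zero]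
    positivity

/-- For a nonconstant total Boolean function `f`, the spectral adversary bound is
at least the spectral sensitivity: `SA(f) ≥ λ(f)`.  In particular, the matrix
`Γ = A_f` satisfies `‖Γ∘D_i‖ ≤ 1` for every `i`, so
`‖Γ‖ / max_i ‖Γ∘D_i‖ ≥ λ(f)`. -/
theorem specSens_le_SA {n : ℕ} (f : (Fin n → Bool) → Bool)
    (hf : ∃ x y, f x ≠ f y) :
    SA f ≥ specSens f ∧
    (∀ i : Fin n, specNorm (Matrix.hadamard (adjMat f) (Dmat i)) ≤ 1) ∧
    specNorm (adjMat f) / (⨆ i : Fin n, specNorm (Matrix.hadamard (adjMat f) (Dmat i)))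
      ≥ specSens f := by
  have hSnn : ∀ M : Matrix (Fin n → Bool) (Fin n → Bool) ℝ,
      0 ≤ ⨆ i : Fin n, specNorm (Matrix.hadamard M (Dmat i)) :=
    fun M => Real.iSup_nonneg fun i => specNorm_nonneg _
  have hratio : specNorm (adjMat f) /
      (⨆ i : Fin n, specNorm (Matrix.hadamard (adjMat f) (Dmat i))) ≥ specSens f := by
    have hS1 : (⨆ i : Fin n, specNorm (Matrix.hadamard (adjMat f) (Dmat i))) ≤ 1 :=
      Real.iSup_le (specNorm_adjMat_hadamard_le_one f) zero_le_one
    have hle := specNorm_le_of_diag_zero (adjMat f) fun x => adjMat_eq_zero rfl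
    change specNorm (adjMat f) ≤ _
    -- a zero denominator makes the ratio `0`, but then `‖A_f‖ = 0` too
    rcases (hSnn (adjMat f)).eq_or_lt with h0 | hpos
    · rw [← h0, mul_zero] at hle
      rwa [← h0, div_zero]
    · rw [le_div_iff₀ hpos]
      exact mul_le_of_le_one_right (specNorm_nonneg _) hS1
  refine ⟨?_, specNorm_adjMat_hadamard_le_one f, hratio⟩
  by_cases hA : adjMat f = 0
  · -- every ratio is nonnegative, while `λ(f) = 0`
    have h0 : specSens f = 0 := by simp [specSens, specNorm, hA]
    rw [h0]
    refine Real.sSup_nonneg ?_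
    rintro r ⟨Γ, -, -, -, -, rfl⟩
    exact div_nonneg (specNorm_nonneg _) (hSnn Γ)
  · refine hratio.le.trans (le_csSup ⟨4 ^ n, ?_⟩ ⟨adjMat f, adjMat_isSymm f, fun x y => ?_, hA,
      fun x y => adjMat_eq_zero, rfl⟩)
    · rintro r ⟨Γ, -, -, -, hΓ, rfl⟩
      exact div_le_of_le_mul₀ (hSnn Γ) (by positivity)
        (specNorm_le_of_diag_zero Γ fun x => hΓ x x rfl)
    · unfold adjMat
      split_ifs <;> norm_num
end

section
/- For every nonconstant total Boolean function f : {0,1}^n → {0,1}, the single-bit strong weighted adversary equals the spectral sensitivity: SWA₁(f) = λ(f). -/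
/-- A feasible weight scheme for the single-bit strong weighted adversary:
nonnegative, symmetric, not identically zero, and supported on pairs `(x,y)` with
`f(x) ≠ f(y)` and Hamming distance exactly `1`. -/
def SWAFeasible {n : ℕ} (f : (Fin n → Bool) → Bool)
    (w : (Fin n → Bool) → (Fin n → Bool) → ℝ) : Prop :=
  (∀ x y, 0 ≤ w x y) ∧ (∀ x y, w x y = w y x) ∧ w ≠ 0 ∧
    ∀ x y, (f x = f y ∨ hammingDist x y ≠ 1) → w x y = 0

/-- Weighted degree `wt(x) = Σ_y w(x,y)`. -/
noncomputable def wtDeg {n : ℕ} (w : (Fin n → Bool) → (Fin n → Bool) → ℝ)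
    (x : Fin n → Bool) : ℝ :=
  ∑ y : Fin n → Bool, w x y

/-- Single-bit strong weighted adversary bound. -/
noncomputable def SWA1 {n : ℕ} (f : (Fin n → Bool) → Bool) : ℝ :=
  sSup {r | ∃ w : (Fin n → Bool) → (Fin n → Bool) → ℝ, SWAFeasible f w ∧
    r = sInf {t | ∃ x : Fin n → Bool, ∃ i : Fin n, 0 < w x (flipBit x i) ∧
      t = Real.sqrt (wtDeg w x * wtDeg w (flipBit x i)) / w x (flipBit x i)}}

/-! ### Edges of the hypercube -/

theorem hammingDist_flipBit {n : ℕ} (x : Fin n → Bool) (i : Fin n) :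
    hammingDist x (flipBit x i) = 1 := by
  have h : (Finset.univ.filter fun j => x j ≠ flipBit x i j) = {i} := by
    ext j
    rw [Finset.mem_filter, Finset.mem_singleton]
    by_cases hj : j = i
    · subst hj; simp [flipBit]
    · simp [flipBit, hj]
  simp only [hammingDist, h, Finset.card_singleton]

theorem exists_eq_flipBit_of_hammingDist_eq_one {n : ℕ} {x y : Fin n → Bool}
    (h : hammingDist x y = 1) : ∃ i, y = flipBit x i := by
  obtain ⟨i, hi⟩ := Finset.card_eq_one.mp h
  refine ⟨i, funext fun j => ?_⟩
  have hj := Finset.ext_iff.mp hi j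
  simp only [Finset.mem_filter, Finset.mem_univ, true_and, Finset.mem_singleton] at hj
  by_cases hji : j = i
  · subst hji
    have hne : x j ≠ y j := hj.mpr rfl
    simp only [flipBit, Function.update_self]
    revert hne
    cases x j <;> cases y j <;> simp
  · have hxy : x j = y j := by
      by_contra hne
      exact hji (hj.mp hne)
    simp [flipBit, hji, hxy]

theorem adjMat_apply {n : ℕ} (f : (Fin n → Bool) → Bool) (x y : Fin n → Bool) :
    adjMat f x y = if hammingDist x y = 1 ∧ f x ≠ f y then 1 else 0 := by
  have h : (∃ i, y = flipBit x i) ↔ hammingDist x y = 1 :=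
    ⟨by rintro ⟨i, rfl⟩; exact hammingDist_flipBit x i, exists_eq_flipBit_of_hammingDist_eq_one⟩
  simp only [adjMat, h]

theorem adjMat_symm {n : ℕ} (f : (Fin n → Bool) → Bool) (x y : Fin n → Bool) :
    adjMat f x y = adjMat f y x := by
  simp only [adjMat_apply, hammingDist_comm x y, ne_comm (a := f x)]

theorem adjMat_nonneg {n : ℕ} (f : (Fin n → Bool) → Bool) (x y : Fin n → Bool) :
    0 ≤ adjMat f x y := by
  rw [adjMat_apply]; split_ifs <;> norm_num

/-- A nonconstant Boolean function has a sensitive edge: otherwise the coordinates of `x` could be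
changed one at a time into those of `y` without changing the value of `f`. -/
theorem exists_flipBit_ne {n : ℕ} {f : (Fin n → Bool) → Bool} (hf : ∃ x y, f x ≠ f y) :
    ∃ x i, f x ≠ f (flipBit x i) := by
  by_contra! h
  obtain ⟨x, y, hxy⟩ := hf
  have key : ∀ s : Finset (Fin n), f (fun i => if i ∈ s then y i else x i) = f x := by
    intro s
    induction s using Finset.induction_on with
    | empty => simp
    | insert a s ha ih =>
      rw [← ih]
      set z : Fin n → Bool := fun i => if i ∈ s then y i else x i with hz
      by_cases hya : y a = z a
      · congr 1
        funext i
        by_cases hi : i = a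
        · subst hi; simp [hya]
        · simp [hz, hi]
      · rw [h z a]
        congr 1
        funext i
        by_cases hi : i = a
        · subst hi
          simp only [flipBit, Function.update_self, Finset.mem_insert, true_or, if_true]
          revert hya
          cases y i <;> cases z i <;> simp
        · simp [flipBit, hz, hi]
  apply hxy
  simpa using (key Finset.univ).symm

/-! ### The adjacency operator -/

/-- The adjacency matrix of the sensitivity graph as an operator on Euclidean space. -/
noncomputable def adjOp {n : ℕ} (f : (Fin n → Bool) → Bool) :
    EuclideanSpace ℝ (Fin n → Bool) →L[ℝ] EuclideanSpace ℝ (Fin n → Bool) :=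
  LinearMap.toContinuousLinearMap (Matrix.toEuclideanLin (adjMat f))

theorem norm_adjOp {n : ℕ} (f : (Fin n → Bool) → Bool) : ‖adjOp f‖ = specSens f := rfl

theorem adjOp_apply {n : ℕ} (f : (Fin n → Bool) → Bool) (v : EuclideanSpace ℝ (Fin n → Bool))
    (x : Fin n → Bool) : adjOp f v x = ∑ y, adjMat f x y * v y := rfl

theorem inner_eq_sum {ι : Type*} [Fintype ι] (u v : EuclideanSpace ℝ ι) :
    inner ℝ u v = ∑ x, u x * v x := by
  simp [PiLp.inner_apply, mul_comm]

theorem inner_adjOp {n : ℕ} (f : (Fin n → Bool) → Bool)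
    (u v : EuclideanSpace ℝ (Fin n → Bool)) :
    inner ℝ (adjOp f u) v = inner ℝ u (adjOp f v) := by
  simp only [inner_eq_sum, adjOp_apply, Finset.sum_mul, Finset.mul_sum]
  rw [Finset.sum_comm]
  refine Finset.sum_congr rfl fun x _ => Finset.sum_congr rfl fun y _ => ?_
  rw [adjMat_symm f y x]; ring

theorem specSens_pos {n : ℕ} {f : (Fin n → Bool) → Bool} (hf : ∃ x y, f x ≠ f y) :
    0 < specSens f := by
  rw [← norm_adjOp, norm_pos_iff]
  intro h
  obtain ⟨x, i, hx⟩ := exists_flipBit_ne hf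
  have h1 : adjOp f (EuclideanSpace.single (flipBit x i) 1) x = 1 := by
    rw [adjOp_apply, Finset.sum_eq_single (flipBit x i)]
    · simp [adjMat_apply, hammingDist_flipBit, hx]
    · intro y _ hy; simp [hy]
    · simp
  rw [h] at h1
  simp at h1

/-- The operator norm is attained at a nonnegative unit vector: replacing a maximizer by its
entrywise absolute value does not decrease `‖A v‖`, because `A` has nonnegative entries. -/
theorem exists_nonneg_maximizer {n : ℕ} (f : (Fin n → Bool) → Bool) :
    ∃ u : EuclideanSpace ℝ (Fin n → Bool),
      (∀ x, 0 ≤ u x) ∧ ‖u‖ = 1 ∧ ‖adjOp f u‖ = specSens f := by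
  obtain ⟨v, hv, hmax⟩ := (isCompact_sphere (0 : EuclideanSpace ℝ (Fin n → Bool)) 1).exists_isMaxOn
    (NormedSpace.sphere_nonempty.mpr zero_le_one)
    (f := fun v => ‖adjOp f v‖) (by fun_prop)
  have hv1 : ‖v‖ = 1 := by simpa using hv
  have hle : ‖adjOp f‖ ≤ ‖adjOp f v‖ :=
    ContinuousLinearMap.opNorm_le_of_unit_norm (norm_nonneg _) fun z hz =>
      hmax (by simpa using hz)
  let u : EuclideanSpace ℝ (Fin n → Bool) := WithLp.toLp 2 fun x => |v x|
  have hu : ∀ x, u x = |v x| := fun x => rfl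
  have hu1 : ‖u‖ = 1 := by
    rw [← hv1]; simp [EuclideanSpace.norm_eq, hu]
  refine ⟨u, fun x => by simp [hu], hu1, le_antisymm ?_ ?_⟩
  · simpa [hu1, norm_adjOp] using (adjOp f).le_opNorm u
  · rw [← norm_adjOp]
    refine hle.trans ?_
    rw [EuclideanSpace.norm_eq, EuclideanSpace.norm_eq]
    refine Real.sqrt_le_sqrt (Finset.sum_le_sum fun x _ => ?_)
    refine pow_le_pow_left₀ (norm_nonneg _) ?_ 2
    rw [Real.norm_eq_abs, Real.norm_eq_abs]
    refine le_trans ?_ (le_abs_self _)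
    rw [adjOp_apply, adjOp_apply]
    refine (Finset.abs_sum_le_sum_abs _ _).trans (le_of_eq ?_)
    refine Finset.sum_congr rfl fun y _ => ?_
    rw [abs_mul, abs_of_nonneg (adjMat_nonneg f x y), hu]

/-- Perron–Frobenius for the sensitivity graph. A nonnegative unit vector `u` with `‖A u‖ = λ`
satisfies `A² u = λ² u`, by expanding `‖A² u - λ² u‖²`, and then `v = A u + λ u` is an eigenvector
for `+λ`. -/
theorem exists_nonneg_eigenvector {n : ℕ} {f : (Fin n → Bool) → Bool}
    (hf : ∃ x y, f x ≠ f y) :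
    ∃ v : EuclideanSpace ℝ (Fin n → Bool),
      (∀ x, 0 ≤ v x) ∧ v ≠ 0 ∧ adjOp f v = specSens f • v := by
  have hpos := specSens_pos hf
  obtain ⟨u, hu0, hu1, hu⟩ := exists_nonneg_maximizer f
  set l := specSens f with hl
  have hAA : adjOp f (adjOp f u) = l ^ 2 • u := by
    have hle : ‖adjOp f (adjOp f u)‖ ≤ l * l := by
      simpa [hu, norm_adjOp, ← hl] using (adjOp f).le_opNorm (adjOp f u)
    have hsq : ‖adjOp f (adjOp f u) - l ^ 2 • u‖ ^ 2 ≤ 0 := by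
      rw [norm_sub_sq_real, inner_smul_right, inner_adjOp, real_inner_self_eq_norm_sq, hu,
        norm_smul, hu1, Real.norm_eq_abs, abs_of_nonneg (sq_nonneg l)]
      have := pow_le_pow_left₀ (norm_nonneg _) hle 2
      nlinarith
    have h0 := le_antisymm hsq (sq_nonneg _)
    exact sub_eq_zero.mp (norm_eq_zero.mp (pow_eq_zero_iff two_ne_zero |>.mp h0))
  have hAu0 : ∀ x, 0 ≤ adjOp f u x := fun x => by
    rw [adjOp_apply]
    exact Finset.sum_nonneg fun y _ => mul_nonneg (adjMat_nonneg f x y) (hu0 y)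
  refine ⟨adjOp f u + l • u, fun x => ?_, fun h => ?_, ?_⟩
  · simpa using add_nonneg (hAu0 x) (mul_nonneg hpos.le (hu0 x))
  · have hzero : u = 0 := by
      ext x
      have hx : adjOp f u x + l * u x = 0 := by
        simpa using congrArg (fun z : EuclideanSpace ℝ (Fin n → Bool) => z x) h
      have h1 := hAu0 x
      have h2 := mul_nonneg hpos.le (hu0 x)
      have h3 : l * u x = 0 := by linarith
      simpa [hpos.ne'] using h3
    rw [hzero, norm_zero] at hu1
    exact zero_ne_one hu1
  · rw [map_add, map_smul, hAA, smul_add, smul_smul, add_comm, sq]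

/-! ### The adversary bound -/

theorem sInf_ratio_le_specSens {n : ℕ} {f : (Fin n → Bool) → Bool}
    {w : (Fin n → Bool) → (Fin n → Bool) → ℝ} (hw : SWAFeasible f w) :
    sInf {t | ∃ x : Fin n → Bool, ∃ i : Fin n, 0 < w x (flipBit x i) ∧
      t = Real.sqrt (wtDeg w x * wtDeg w (flipBit x i)) / w x (flipBit x i)} ≤ specSens f := by
  obtain ⟨hnn, -, hne, hsupp⟩ := hw
  set S := {t | ∃ x : Fin n → Bool, ∃ i : Fin n, 0 < w x (flipBit x i) ∧
      t = Real.sqrt (wtDeg w x * wtDeg w (flipBit x i)) / w x (flipBit x i)} with hS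
  have hbdd : BddBelow S := by
    refine ⟨0, ?_⟩
    rintro t ⟨x, i, hpos, rfl⟩
    positivity
  have hwt : ∀ x, 0 ≤ wtDeg w x := fun x => Finset.sum_nonneg fun y _ => hnn x y
  have hedge : ∀ x y, sInf S * w x y ≤ √(wtDeg w x) * (adjMat f x y * √(wtDeg w y)) := by
    intro x y
    rcases (hnn x y).eq_or_lt with h0 | hpos
    · rw [← h0, mul_zero]
      exact mul_nonneg (Real.sqrt_nonneg _)
        (mul_nonneg (adjMat_nonneg f x y) (Real.sqrt_nonneg _))
    · have hxy : hammingDist x y = 1 ∧ f x ≠ f y := by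
        by_contra hcon
        refine hpos.ne' (hsupp x y ?_)
        tauto
      obtain ⟨i, rfl⟩ := exists_eq_flipBit_of_hammingDist_eq_one hxy.1
      rw [adjMat_apply, if_pos hxy, one_mul, ← Real.sqrt_mul (hwt x), ← le_div_iff₀ hpos]
      exact csInf_le hbdd ⟨x, i, hpos, rfl⟩
  let v : EuclideanSpace ℝ (Fin n → Bool) := WithLp.toLp 2 fun x => √(wtDeg w x)
  have hv : ∀ x, v x = √(wtDeg w x) := fun x => rfl
  have hvv : ‖v‖ ^ 2 = ∑ x, wtDeg w x := by
    rw [← real_inner_self_eq_norm_sq, inner_eq_sum]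
    exact Finset.sum_congr rfl fun x _ => Real.mul_self_sqrt (hwt x)
  have hlow : sInf S * ‖v‖ ^ 2 ≤ inner ℝ v (adjOp f v) := by
    rw [hvv, inner_eq_sum, Finset.mul_sum]
    refine Finset.sum_le_sum fun x _ => ?_
    rw [adjOp_apply, wtDeg, Finset.mul_sum, Finset.mul_sum]
    exact Finset.sum_le_sum fun y _ => hedge x y
  have hup : inner ℝ v (adjOp f v) ≤ specSens f * ‖v‖ ^ 2 := by
    have h1 := real_inner_le_norm v (adjOp f v)
    have h2 := (adjOp f).le_opNorm v
    rw [norm_adjOp] at h2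
    nlinarith [norm_nonneg v]
  have hvpos : 0 < ‖v‖ ^ 2 := by
    refine lt_of_le_of_ne (sq_nonneg _) fun h => hne ?_
    rw [hvv] at h
    funext x y
    have hx := (Finset.sum_eq_zero_iff_of_nonneg fun x _ => hwt x).mp h.symm x (Finset.mem_univ x)
    exact (Finset.sum_eq_zero_iff_of_nonneg fun y _ => hnn x y).mp hx y (Finset.mem_univ y)
  exact le_of_mul_le_mul_right (hlow.trans hup) hvpos

/-- The Perron weights `A x y * v x * v y` are optimal. -/
theorem exists_feasible_sInf_eq {n : ℕ} {f : (Fin n → Bool) → Bool}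
    (hf : ∃ x y, f x ≠ f y) :
    ∃ w : (Fin n → Bool) → (Fin n → Bool) → ℝ, SWAFeasible f w ∧
      specSens f = sInf {t | ∃ x : Fin n → Bool, ∃ i : Fin n, 0 < w x (flipBit x i) ∧
        t = Real.sqrt (wtDeg w x * wtDeg w (flipBit x i)) / w x (flipBit x i)} := by
  have hl := specSens_pos hf
  obtain ⟨v, hv0, hv, hAv⟩ := exists_nonneg_eigenvector hf
  let w : (Fin n → Bool) → (Fin n → Bool) → ℝ := fun x y => adjMat f x y * v x * v y
  have hw : ∀ x y, w x y = adjMat f x y * v x * v y := fun x y => rfl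
  have hwt : ∀ x, wtDeg w x = specSens f * v x ^ 2 := fun x => by
    have hx : ∑ y, adjMat f x y * v y = specSens f * v x := by
      rw [← adjOp_apply, hAv]; simp
    calc wtDeg w x = v x * ∑ y, adjMat f x y * v y := by
          rw [wtDeg, Finset.mul_sum]
          exact Finset.sum_congr rfl fun y _ => by rw [hw]; ring
      _ = specSens f * v x ^ 2 := by rw [hx]; ring
  have hnn : ∀ x y, 0 ≤ w x y := fun x y =>
    mul_nonneg (mul_nonneg (adjMat_nonneg f x y) (hv0 x)) (hv0 y)
  have hw0 : w ≠ 0 := by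
    intro h
    refine hv ?_
    ext x
    have hx : wtDeg w x = 0 := by simp [wtDeg, h]
    rw [hwt] at hx
    simpa [hl.ne'] using hx
  have hsupp : ∀ x y, (f x = f y ∨ hammingDist x y ≠ 1) → w x y = 0 := by
    intro x y h
    rw [hw, adjMat_apply, if_neg (by tauto), zero_mul, zero_mul]
  have hratio : ∀ x i, 0 < w x (flipBit x i) →
      √(wtDeg w x * wtDeg w (flipBit x i)) / w x (flipBit x i) = specSens f := by
    intro x i hpos
    have hadj : adjMat f x (flipBit x i) = 1 := by
      rw [adjMat_apply, if_pos]
      by_contra hcon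
      exact hpos.ne' (hsupp _ _ (by tauto))
    rw [div_eq_iff hpos.ne', hw, hadj, hwt, hwt, one_mul]
    rw [show specSens f * v x ^ 2 * (specSens f * v (flipBit x i) ^ 2)
      = (specSens f * (v x * v (flipBit x i))) ^ 2 by ring]
    exact Real.sqrt_sq (mul_nonneg hl.le (mul_nonneg (hv0 _) (hv0 _)))
  refine ⟨w, ⟨hnn, fun x y => ?_, hw0, hsupp⟩, ?_⟩
  · rw [hw, hw, adjMat_symm f x y]; ring
  -- Nonemptiness of the set of ratios matters: the real infimum of `∅` is `0`.
  · obtain ⟨x, y, hxy⟩ : ∃ x y, 0 < w x y := by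
      by_contra! h
      exact hw0 (funext fun x => funext fun y => le_antisymm (h x y) (hnn x y))
    obtain ⟨i, rfl⟩ : ∃ i, y = flipBit x i := by
      refine exists_eq_flipBit_of_hammingDist_eq_one ?_
      by_contra hne
      exact hxy.ne' (hsupp x y (Or.inr hne))
    rw [← csInf_singleton (specSens f)]
    congr 1
    ext t
    constructor
    · rintro rfl
      exact ⟨x, i, hxy, (hratio x i hxy).symm⟩
    · rintro ⟨z, j, hpos, rfl⟩
      exact hratio z j hpos

/-- For every nonconstant total Boolean function `f`, the single-bit strong weighted
adversary equals the spectral sensitivity: `SWA₁(f) = λ(f)`. -/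
theorem swa1_eq_specSens {n : ℕ} (f : (Fin n → Bool) → Bool)
    (hf : ∃ x y, f x ≠ f y) :
    SWA1 f = specSens f := by
  refine IsGreatest.csSup_eq ⟨exists_feasible_sInf_eq hf, ?_⟩
  rintro r ⟨w, hw, rfl⟩
  exact sInf_ratio_le_specSens hw
end
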